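/- Let d* > d_s > 0 be real numbers, set a = (d*)² − d_s², and let α > 0; let H(e) = (α/4)·(1/(e + a) − 1/a)² be the barrier potential, defined for e ≠ −a. Let e : [0, ∞) → ℝ be continuous with e(0) > −a, and suppose that for every t ≥ 0 the following holds: if e(s) > −a for all s ∈ [0, t], then H(e(t)) ≤ H(e(0)). Then e(t) > −a for all t ≥ 0; moreover there exists δ > 0 such that e(t) ≥ −a + δ for all t ≥ 0. In particular, if q : [0, ∞) → ℝⁿ is continuous and e(t) = ‖q(t)‖² − (d*)², then ‖q(t)‖ > d_s for all t ≥ 0 (no collision occurs). -/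

import Mathlib

/-!
Before the first time `T` at which `e` could reach `-a`, the decay hypothesis keeps `e` in a
sublevel set of `H`. Since `H` blows up at `-a`, that set is bounded away from `-a`, and by
continuity so is `e T`: the time `T` does not exist.
-/

open Set Filter Topology

section FirstExit

variable {ι β : Type*} [TopologicalSpace ι] [TopologicalSpace β] {f : ι → β} {t₀ t : ι} {b c : β}

lemma exists_isLeast_setOf_mem_Icc_and_le
    [ConditionallyCompleteLinearOrder ι] [OrderTopology ι] [Preorder β] [ClosedIicTopology β]
    (hf : ContinuousOn f (Icc t₀ t)) (ht : t₀ ≤ t) (hft : f t ≤ b) :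
    ∃ T, IsLeast {s | s ∈ Icc t₀ t ∧ f s ≤ b} T :=
  (isCompact_Icc.of_isClosed_subset (hf.preimage_isClosed_of_isClosed isClosed_Icc isClosed_Iic)
    inter_subset_left).exists_isLeast ⟨t, right_mem_Icc.mpr ht, hft⟩

lemma le_of_continuousOn_Icc_of_forall_Ico_le
    [LinearOrder ι] [OrderTopology ι] [DenselyOrdered ι] [Preorder β] [OrderClosedTopology β]
    (hf : ContinuousOn f (Icc t₀ t)) (ht : t₀ < t) (hc : ∀ s ∈ Ico t₀ t, c ≤ f s) :
    c ≤ f t := by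
  have h_closure : closure (Ico t₀ t) = Icc t₀ t := closure_Ico ht.ne
  exact le_on_closure hc continuousOn_const (h_closure ▸ hf) (h_closure ▸ right_mem_Icc.mpr ht.le)

theorem forall_lt_of_forall_Icc_lt_imp_le
    [ConditionallyCompleteLinearOrder ι] [OrderTopology ι] [DenselyOrdered ι]
    [LinearOrder β] [OrderClosedTopology β]
    (hf : ContinuousOn f (Ici t₀)) (h₀ : b < f t₀) (hbc : b < c)
    (hgap : ∀ t ≥ t₀, (∀ s ∈ Icc t₀ t, b < f s) → c ≤ f t) :
    ∀ t ≥ t₀, b < f t := by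
  intro t ht
  by_contra! hft
  obtain ⟨T, ⟨⟨ht₀T, hTt⟩, hfT⟩, hT_least⟩ :=
    exists_isLeast_setOf_mem_Icc_and_le (hf.mono Icc_subset_Ici_self) ht hft
  have h_before : ∀ s ∈ Ico t₀ T, b < f s := fun s hs ↦
    lt_of_not_ge fun hfs ↦ (hT_least ⟨⟨hs.1, hs.2.le.trans hTt⟩, hfs⟩).not_gt hs.2
  have ht₀_lt_T : t₀ < T := ht₀T.lt_of_ne fun h ↦ (h ▸ hfT).not_gt h₀
  have h_le_T : c ≤ f T :=
    le_of_continuousOn_Icc_of_forall_Ico_le (hf.mono Icc_subset_Ici_self) ht₀_lt_T fun s hs ↦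
      hgap s hs.1 fun r hr ↦ h_before r ⟨hr.1, hr.2.trans_lt hs.2⟩
  exact (hbc.trans_le h_le_T).not_ge hfT

end FirstExit

lemma exists_gt_forall_le_of_tendsto_nhdsGT_atTop {β γ : Type*}
    [LinearOrder β] [NoMaxOrder β] [TopologicalSpace β] [OrderTopology β]
    [Preorder γ] [NoMaxOrder γ] {V : β → γ} {b : β}
    (hV : Tendsto V (𝓝[>] b) atTop) (v : γ) :
    ∃ c > b, ∀ x > b, V x ≤ v → c ≤ x := by
  obtain ⟨c, hbc, hc⟩ :=
    mem_nhdsGT_iff_exists_Ioo_subset.mp (hV.eventually (eventually_gt_atTop v))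
  exact ⟨c, hbc, fun x hbx hVx ↦ le_of_not_gt fun hxc ↦ (hc ⟨hbx, hxc⟩).not_ge hVx⟩

theorem exists_gt_forall_le_of_barrier {ι β γ : Type*}
    [ConditionallyCompleteLinearOrder ι] [DenselyOrdered ι] [TopologicalSpace ι] [OrderTopology ι]
    [LinearOrder β] [NoMaxOrder β] [TopologicalSpace β] [OrderTopology β]
    [Preorder γ] [NoMaxOrder γ] {V : β → γ} {b : β} {f : ι → β} {t₀ : ι}
    (hV : Tendsto V (𝓝[>] b) atTop) (hf : ContinuousOn f (Ici t₀)) (h₀ : b < f t₀)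
    (hdecay : ∀ t ≥ t₀, (∀ s ∈ Icc t₀ t, b < f s) → V (f t) ≤ V (f t₀)) :
    ∃ c > b, ∀ t ≥ t₀, c ≤ f t := by
  obtain ⟨c, hbc, hc⟩ := exists_gt_forall_le_of_tendsto_nhdsGT_atTop hV (V (f t₀))
  have hgap : ∀ t ≥ t₀, (∀ s ∈ Icc t₀ t, b < f s) → c ≤ f t := fun t ht hsafe ↦
    hc (f t) (hsafe t (right_mem_Icc.mpr ht)) (hdecay t ht hsafe)
  have hsafe := forall_lt_of_forall_Icc_lt_imp_le hf h₀ hbc hgap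
  exact ⟨c, hbc, fun t ht ↦ hgap t ht fun s hs ↦ hsafe s hs.1⟩

lemma tendsto_const_mul_one_div_add_sub_sq_nhdsGT {𝕜 : Type*} [Field 𝕜] [LinearOrder 𝕜]
    [IsStrictOrderedRing 𝕜] [TopologicalSpace 𝕜] [OrderTopology 𝕜]
    {k : 𝕜} (hk : 0 < k) (a m : 𝕜) :
    Tendsto (fun x ↦ k * (1 / (x + a) - m) ^ 2) (𝓝[>] (-a)) atTop := by
  have h_shift : Tendsto (fun x ↦ x + a) (𝓝[>] (-a)) (𝓝[>] 0) := by
    refine tendsto_nhdsWithin_iff.mpr ⟨?_, ?_⟩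
    · exact tendsto_nhdsWithin_of_tendsto_nhds <|
        (continuous_add_const a).tendsto' (-a) 0 (neg_add_cancel a)
    · filter_upwards [self_mem_nhdsWithin] with x hx
      exact neg_lt_iff_pos_add.mp hx
  have h_inv : Tendsto (fun x ↦ 1 / (x + a)) (𝓝[>] (-a)) atTop := by
    simpa only [one_div, Function.comp_def] using tendsto_inv_nhdsGT_zero.comp h_shift
  have h_sub : Tendsto (fun x ↦ 1 / (x + a) - m) (𝓝[>] (-a)) atTop := by
    simpa only [sub_eq_add_neg] using tendsto_atTop_add_const_right _ (-m) h_inv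
  exact ((tendsto_pow_atTop two_ne_zero).comp h_sub).const_mul_atTop hk

theorem barrier_safety_invariance_general
    (dstar ds a : ℝ) (ha : a = dstar ^ 2 - ds ^ 2)
    (H : ℝ → ℝ) (hH : Tendsto H (𝓝[>] (-a)) atTop)
    (e : ℝ → ℝ) (hecont : ContinuousOn e (Ici 0))
    (h0 : e 0 > -a)
    (hdecay : ∀ t ≥ (0 : ℝ), (∀ s ∈ Icc (0 : ℝ) t, e s > -a) → H (e t) ≤ H (e 0)) :
    (∀ t ≥ (0 : ℝ), e t > -a) ∧
    (∃ δ > (0 : ℝ), ∀ t ≥ (0 : ℝ), e t ≥ -a + δ) ∧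
    (∀ (E : Type*) [SeminormedAddGroup E] (q : ℝ → E),
      (∀ t ≥ (0 : ℝ), e t = ‖q t‖ ^ 2 - dstar ^ 2) →
      ∀ t ≥ (0 : ℝ), ‖q t‖ > ds) := by
  obtain ⟨c, hc, hle⟩ := exists_gt_forall_le_of_barrier hH hecont h0 hdecay
  have hsafe : ∀ t ≥ (0 : ℝ), e t > -a := fun t ht ↦ hc.trans_le (hle t ht)
  refine ⟨hsafe, ⟨c + a, neg_lt_iff_pos_add.mp hc, fun t ht ↦ ?_⟩, fun E _ q hq t ht ↦ ?_⟩
  · linarith [hle t ht]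
  · have h_sq : ds ^ 2 < ‖q t‖ ^ 2 := by linarith [hsafe t ht, hq t ht]
    exact lt_of_pow_lt_pow_left₀ 2 (norm_nonneg _) h_sq

/-- Barrier certificate / safety invariance: if `e : [0,∞) → ℝ` is continuous with
`e 0 > −a`, and the barrier potential `H(e) = (α/4)(1/(e+a) − 1/a)²` (with
`a = (d*)² − d_s² > 0`) is nonincreasing along the trajectory as long as it has
stayed above `−a`, then `e(t) > −a` for all `t ≥ 0`; moreover `e` stays uniformly
away from `−a`. In particular, if `e(t) = ‖q(t)‖² − (d*)²` for a continuous
`q : [0,∞) → ℝⁿ`, then `‖q(t)‖ > d_s` for all `t ≥ 0`: no collision occurs. -/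
theorem barrier_safety_invariance
    (dstar ds α : ℝ) (hds : 0 < ds) (hd : ds < dstar) (hα : 0 < α)
    (a : ℝ) (ha : a = dstar ^ 2 - ds ^ 2)
    (H : ℝ → ℝ) (hH : ∀ e, H e = α / 4 * (1 / (e + a) - 1 / a) ^ 2)
    (e : ℝ → ℝ) (hecont : ContinuousOn e (Set.Ici 0))
    (h0 : e 0 > -a)
    (hdecay : ∀ t ≥ (0 : ℝ), (∀ s ∈ Set.Icc (0 : ℝ) t, e s > -a) → H (e t) ≤ H (e 0)) :
    (∀ t ≥ (0 : ℝ), e t > -a) ∧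
    (∃ δ > (0 : ℝ), ∀ t ≥ (0 : ℝ), e t ≥ -a + δ) ∧
    (∀ (n : ℕ) (q : ℝ → EuclideanSpace ℝ (Fin n)),
      ContinuousOn q (Set.Ici 0) →
      (∀ t ≥ (0 : ℝ), e t = ‖q t‖ ^ 2 - dstar ^ 2) →
      ∀ t ≥ (0 : ℝ), ‖q t‖ > ds) := by
  have hbarrier : Tendsto H (𝓝[>] (-a)) atTop :=
    funext hH ▸ tendsto_const_mul_one_div_add_sub_sq_nhdsGT (by positivity) a (1 / a)
  exact (barrier_safety_invariance_general dstar ds a ha H hbarrier e hecont h0 hdecay).imp_right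
    (And.imp_right fun hdist _ q _ ↦ hdist _ q)
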